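/- arXiv:2308.07589 — 3 statements merged into one kernel-verified Lean document; each statement's English description precedes it below -/
import Mathlib

section
/- Let (T1, T2) be a pair of commuting contractions on a complex Hilbert space H. Then (T1, T2) has a strongly minimal Andô lift if and only if the adjoint pair (T1*, T2*) has a strongly minimal Andô lift. -/
/-!
Let `(Π, V₁, V₂)` be a strongly minimal Andô lift of `(T₁, T₂)` on `K`. The commuting isometries
`V₁, V₂` extend to commuting unitaries on a larger space `E`; write `ι : K → E` for the embedding
and `S₁, S₂` for the inverses of these unitaries, so that `Sⱼ ι Vⱼ = ι`
(`exists_commuting_extension`; only the fact that the `Sⱼ` are isometries matters). Put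
`G = S₁ S₂` and let `L` be the closed span of all `Gⁿ ι Π h`. The strongly minimal lift of
`(T₁*, T₂*)` is `(ι Π, S₁|L, S₂|L)`.

The point is that `L` is invariant under `S₁` and `S₂`. Since `Vⱼ* Π = Π Tⱼ*`, the space
`M = K ⊖ ran Π` is invariant under `V₁` and `V₂`, whence `L ⊥ ι M` and `Sⱼ ι Π h ⊥ ι M`. Strong
minimality puts `Sⱼ ι Π h` into the closed span of `ι K` and `L`, which is `L ⊕ ι M` because
`ι Π H ⊆ L`; so `Sⱼ ι Π h ∈ L` (`extension_mem`). The relation `(Sⱼ|L)* ι Π = ι Π Tⱼ` also follows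
from `L ⊥ ι M`, because `Vⱼ Π h - Π Tⱼ h ∈ M`.

The space `E` is obtained by the `2 × 2` unitary dilation of `V = V₁ V₂` on `K ⊕ K`, cut down to the
closed span of all `Gⁿ ι K`; there `S₁` is the continuous extension of
`Gⁿ ι k ↦ Gⁿ⁺¹ ι V₂ k`, and similarly for `S₂`.
-/


open ContinuousLinearMap

universe u

/-- `(Pi, V1, V2)` is an Andô lift of the commuting contractive pair `(T1, T2)`:
`Pi` is a linear isometric embedding, `(V1, V2)` is a commuting pair of isometries,
and `Vj* ∘ Pi = Pi ∘ Tj*` for `j = 1, 2`. -/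
def IsAndoLift {H : Type u} {K : Type u}
    [NormedAddCommGroup H] [InnerProductSpace ℂ H] [CompleteSpace H]
    [NormedAddCommGroup K] [InnerProductSpace ℂ K] [CompleteSpace K]
    (T1 T2 : H →L[ℂ] H) (Pi : H →L[ℂ] K) (V1 V2 : K →L[ℂ] K) : Prop :=
  (∀ h, ‖Pi h‖ = ‖h‖) ∧
  adjoint V1 ∘L V1 = 1 ∧ adjoint V2 ∘L V2 = 1 ∧
  V1 ∘L V2 = V2 ∘L V1 ∧
  adjoint V1 ∘L Pi = Pi ∘L adjoint T1 ∧
  adjoint V2 ∘L Pi = Pi ∘L adjoint T2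

/-- Strong minimality of a lift: the span of `⋃ₙ (V1 V2)ⁿ (range Pi)` is dense. -/
def IsStronglyMinimalLift {H : Type u} {K : Type u}
    [NormedAddCommGroup H] [InnerProductSpace ℂ H]
    [NormedAddCommGroup K] [InnerProductSpace ℂ K]
    (Pi : H →L[ℂ] K) (V1 V2 : K →L[ℂ] K) : Prop :=
  Dense (↑(Submodule.span ℂ
    (⋃ n : ℕ, ⇑((V1 ∘L V2) ^ n) '' Set.range ⇑Pi)) : Set K)

/-- `(T1, T2)` admits a strongly minimal Andô lift. -/
def HasStronglyMinimalAndoLift {H : Type u}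
    [NormedAddCommGroup H] [InnerProductSpace ℂ H] [CompleteSpace H]
    (T1 T2 : H →L[ℂ] H) : Prop :=
  ∃ (K : Type u) (_ : NormedAddCommGroup K) (_ : InnerProductSpace ℂ K)
    (_ : CompleteSpace K)
    (Pi : H →L[ℂ] K) (V1 V2 : K →L[ℂ] K),
    IsAndoLift T1 T2 Pi V1 V2 ∧ IsStronglyMinimalLift Pi V1 V2

/-! ### Isometries and closed spans of orbits -/

section Preliminaries

variable {E F : Type u} [NormedAddCommGroup E] [InnerProductSpace ℂ E]
  [NormedAddCommGroup F] [InnerProductSpace ℂ F]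

lemma inner_map_of_norm {A : E →L[ℂ] F} (h : ∀ x, ‖A x‖ = ‖x‖) (x y : E) :
    inner ℂ (A x) (A y) = inner ℂ x y :=
  LinearIsometry.inner_map_map (⟨A.toLinearMap, h⟩ : E →ₗᵢ[ℂ] F) x y

lemma pow_succ_apply (A : E →L[ℂ] E) (n : ℕ) (x : E) : (A ^ (n + 1)) x = (A ^ n) (A x) := by
  rw [pow_succ]; rfl

lemma pow_succ_apply' (A : E →L[ℂ] E) (n : ℕ) (x : E) : (A ^ (n + 1)) x = A ((A ^ n) x) := by
  rw [pow_succ']; rfl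

lemma norm_pow_apply {A : E →L[ℂ] E} (h : ∀ x, ‖A x‖ = ‖x‖) (n : ℕ) (x : E) :
    ‖(A ^ n) x‖ = ‖x‖ := by
  induction n with
  | zero => simp
  | succ n ih => rw [pow_succ_apply', h, ih]

/-- The linear map `(kₙ)ₙ ↦ ∑ₙ Gⁿ ι kₙ` on finitely supported sequences. -/
noncomputable def powSum (G : E →L[ℂ] E) (ι : F →L[ℂ] E) : (ℕ →₀ F) →ₗ[ℂ] E :=
  Finsupp.lsum ℂ fun n => ((G ^ n) ∘L ι).toLinearMap

lemma powSum_single (G : E →L[ℂ] E) (ι : F →L[ℂ] E) (n : ℕ) (k : F) :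
    powSum G ι (Finsupp.single n k) = (G ^ n) (ι k) := by
  rw [powSum, Finsupp.lsum_single]; rfl

lemma powSum_mem {G : E →L[ℂ] E} {ι : F →L[ℂ] E} {M : Submodule ℂ E}
    (h : ∀ n k, (G ^ n) (ι k) ∈ M) (a : ℕ →₀ F) : powSum G ι a ∈ M := by
  induction a using Finsupp.induction_linear with
  | zero => simp
  | add a b ha hb => rw [map_add]; exact M.add_mem ha hb
  | single n k => rw [powSum_single]; exact h n k

lemma ext_of_powSum_dense {G : E →L[ℂ] E} {ι : F →L[ℂ] E} (hd : DenseRange (powSum G ι))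
    {A B : E →L[ℂ] E} (h : ∀ n k, A ((G ^ n) (ι k)) = B ((G ^ n) (ι k))) : A = B := by
  have h0 : ∀ a, A (powSum G ι a) = B (powSum G ι a) := fun a => by
    have := powSum_mem (M := LinearMap.eqLocus A.toLinearMap B.toLinearMap) h a
    exact this
  exact DFunLike.coe_injective
    (hd.equalizer A.continuous B.continuous (funext h0))

/-- The closed span of all `Gⁿ ι k`. -/
noncomputable def powSpan (G : E →L[ℂ] E) (ι : F →L[ℂ] E) : Submodule ℂ E :=
  (LinearMap.range (powSum G ι)).topologicalClosure

lemma isClosed_powSpan (G : E →L[ℂ] E) (ι : F →L[ℂ] E) : IsClosed (powSpan G ι : Set E) :=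
  Submodule.isClosed_topologicalClosure _

lemma pow_mem_powSpan (G : E →L[ℂ] E) (ι : F →L[ℂ] E) (n : ℕ) (k : F) :
    (G ^ n) (ι k) ∈ powSpan G ι :=
  Submodule.le_topologicalClosure _ ⟨_, powSum_single G ι n k⟩

lemma base_mem_powSpan (G : E →L[ℂ] E) (ι : F →L[ℂ] E) (k : F) : ι k ∈ powSpan G ι :=
  pow_mem_powSpan G ι 0 k

lemma powSpan_le {G : E →L[ℂ] E} {ι : F →L[ℂ] E} {M : Submodule ℂ E} (hM : IsClosed (M : Set E))
    (h : ∀ n k, (G ^ n) (ι k) ∈ M) : powSpan G ι ≤ M := by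
  refine Submodule.topologicalClosure_minimal _ ?_ hM
  rintro _ ⟨a, rfl⟩
  exact powSum_mem h a

/-- An operator commuting with `G` leaves the closed span of all `Gⁿ ι k` invariant as soon as it
maps each `ι k` into it. -/
lemma map_mem_powSpan {G S : E →L[ℂ] E} {ι : F →L[ℂ] E} (hSG : ∀ x, S (G x) = G (S x))
    (hS : ∀ k, S (ι k) ∈ powSpan G ι) : ∀ x ∈ powSpan G ι, S x ∈ powSpan G ι := by
  have key : ∀ {S : E →L[ℂ] E}, (∀ n k, S ((G ^ n) (ι k)) ∈ powSpan G ι) →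
      powSpan G ι ≤ (powSpan G ι).comap S.toLinearMap := fun {S} h =>
    powSpan_le ((isClosed_powSpan G ι).preimage S.continuous) h
  have hG : ∀ x ∈ powSpan G ι, G x ∈ powSpan G ι := key fun n k => by
    rw [← pow_succ_apply']; exact pow_mem_powSpan G ι _ k
  refine key fun n k => ?_
  induction n with
  | zero => exact hS k
  | succ n ih => rw [pow_succ_apply', hSG]; exact hG _ ih

lemma apply_mem_powSpan (G : E →L[ℂ] E) (ι : F →L[ℂ] E) :
    ∀ x ∈ powSpan G ι, G x ∈ powSpan G ι :=
  map_mem_powSpan (fun _ => rfl) fun k => by simpa using pow_mem_powSpan G ι 1 k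

lemma denseRange_powSum_restrict (G : E →L[ℂ] E) (ι : F →L[ℂ] E) :
    DenseRange (powSum (G.restrict (apply_mem_powSpan G ι))
      (ι.codRestrict _ (base_mem_powSpan G ι))) := by
  have hpow : ∀ n (x : powSpan G ι),
      (((G.restrict (apply_mem_powSpan G ι)) ^ n) x : E) = (G ^ n) x := by
    intro n x
    induction n with
    | zero => rfl
    | succ n ih => rw [pow_succ_apply', pow_succ_apply', ← ih]; rfl
  have hco : ∀ a, (powSum (G.restrict (apply_mem_powSpan G ι))
      (ι.codRestrict _ (base_mem_powSpan G ι)) a : E) = powSum G ι a := by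
    intro a
    induction a using Finsupp.induction_linear with
    | zero => simp
    | add a b ha hb => rw [map_add, map_add, Submodule.coe_add, ha, hb]
    | single n k => rw [powSum_single, powSum_single, hpow]; rfl
  rintro ⟨x, hx⟩
  rw [closure_subtype]
  refine closure_mono ?_ hx
  rintro _ ⟨a, rfl⟩
  exact ⟨_, ⟨a, rfl⟩, hco a⟩

lemma isometry_of_adjoint [CompleteSpace E] {V : E →L[ℂ] E} (h : adjoint V ∘L V = 1) (x : E) :
    ‖V x‖ = ‖x‖ :=
  (norm_map_iff_adjoint_comp_self V).2 h x

end Preliminaries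

/-! ### Inverting commuting isometries on a larger space -/

section Extension

variable {K : Type u} [NormedAddCommGroup K] [InnerProductSpace ℂ K] [CompleteSpace K]

/-- Every isometry `V` is inverted on `K ⊆ E` by an isometry `G` of a larger space `E`: take the
adjoint of the unitary dilation of `V` on `K ⊕ K`. -/
lemma exists_inverting_isometry (V : K →L[ℂ] K) (hV : adjoint V ∘L V = 1) :
    ∃ (E : Type u) (_ : NormedAddCommGroup E) (_ : InnerProductSpace ℂ E) (_ : CompleteSpace E)
      (ι : K →L[ℂ] E) (G : E →L[ℂ] E),
      (∀ k, ‖ι k‖ = ‖k‖) ∧ (∀ x, ‖G x‖ = ‖x‖) ∧ ∀ k, G (ι (V k)) = ι k := by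
  have hV' : ∀ k, adjoint V (V k) = k := fun k => DFunLike.congr_fun hV k
  let e := WithLp.prodContinuousLinearEquiv 2 ℂ K K
  let G0 : K × K →L[ℂ] K × K :=
    (adjoint V ∘L fst ℂ K K).prod ((1 - V ∘L adjoint V) ∘L fst ℂ K K + V ∘L snd ℂ K K)
  refine ⟨WithLp 2 (K × K), inferInstance, inferInstance, inferInstance,
    e.symm.toContinuousLinearMap ∘L inl ℂ K K,
    e.symm.toContinuousLinearMap ∘L G0 ∘L e.toContinuousLinearMap, ?_, ?_, ?_⟩
  · intro k
    simp [e]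
  · intro x
    have hx : ‖(e.symm.toContinuousLinearMap ∘L G0 ∘L e.toContinuousLinearMap) x‖ ^ 2
        = ‖x‖ ^ 2 := by
      obtain ⟨⟨a, b⟩⟩ := x
      simp only [WithLp.prod_norm_sq_eq_of_L2]
      change ‖adjoint V a‖ ^ 2 + ‖(a - V (adjoint V a)) + V b‖ ^ 2 = ‖a‖ ^ 2 + ‖b‖ ^ 2
      have h1 : inner ℂ (a - V (adjoint V a)) (V b) = 0 := by
        rw [← adjoint_inner_left, map_sub, hV', sub_self, inner_zero_left]
      have h2 : inner ℂ (a - V (adjoint V a)) (V (adjoint V a)) = 0 := by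
        rw [← adjoint_inner_left, map_sub, hV', sub_self, inner_zero_left]
      have h3 := norm_add_sq_eq_norm_sq_add_norm_sq_of_inner_eq_zero _ _ h1
      have h4 := norm_add_sq_eq_norm_sq_add_norm_sq_of_inner_eq_zero _ _ h2
      rw [sub_add_cancel] at h4
      rw [isometry_of_adjoint hV] at h3 h4
      nlinarith
    exact (sq_eq_sq₀ (norm_nonneg _) (norm_nonneg _)).1 hx
  · intro k
    change e.symm (G0 (V k, 0)) = e.symm (k, 0)
    simp [G0, hV']

/-- Minimal version of `exists_inverting_isometry`: the vectors `Gⁿ ι k` span a dense subspace. -/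
lemma exists_minimal_inverting_isometry (V : K →L[ℂ] K) (hV : adjoint V ∘L V = 1) :
    ∃ (E : Type u) (_ : NormedAddCommGroup E) (_ : InnerProductSpace ℂ E) (_ : CompleteSpace E)
      (ι : K →L[ℂ] E) (G : E →L[ℂ] E),
      (∀ k, ‖ι k‖ = ‖k‖) ∧ (∀ x, ‖G x‖ = ‖x‖) ∧ (∀ k, G (ι (V k)) = ι k) ∧
      DenseRange (powSum G ι) := by
  obtain ⟨E, _, _, _, ι, G, hι, hG, hGV⟩ := exists_inverting_isometry V hV
  refine ⟨powSpan G ι, inferInstance, inferInstance,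
    (isClosed_powSpan G ι).completeSpace_coe,
    ι.codRestrict _ (base_mem_powSpan G ι), G.restrict (apply_mem_powSpan G ι), hι,
    fun x => hG x, fun k => Subtype.ext (hGV k), denseRange_powSum_restrict G ι⟩

/-- An isometry `A` commuting with `V` induces the isometry `Gⁿ ι k ↦ Gⁿ⁺¹ ι A k`. -/
lemma exists_induced_isometry {K E : Type u} [NormedAddCommGroup K] [InnerProductSpace ℂ K]
    [NormedAddCommGroup E] [InnerProductSpace ℂ E] [CompleteSpace E] {V A : K →L[ℂ] K} {ι : K →L[ℂ] E} {G : E →L[ℂ] E}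
    (hι : ∀ k, ‖ι k‖ = ‖k‖) (hG : ∀ x, ‖G x‖ = ‖x‖) (hGV : ∀ k, G (ι (V k)) = ι k)
    (hd : DenseRange (powSum G ι)) (hA : ∀ k, ‖A k‖ = ‖k‖) (hAV : ∀ k, A (V k) = V (A k)) :
    ∃ S : E →L[ℂ] E, (∀ x, ‖S x‖ = ‖x‖) ∧
      ∀ n k, S ((G ^ n) (ι k)) = (G ^ n) (G (ι (A k))) := by
  let f := powSum G (G ∘L ι ∘L A)
  have hAVp : ∀ m k, A ((V ^ m) k) = (V ^ m) (A k) := by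
    intro m
    induction m with
    | zero => simp
    | succ m ih => intro k; rw [pow_succ_apply', pow_succ_apply', hAV, ih]
  have hshift : ∀ m n k, (G ^ (n + m)) (ι ((V ^ m) k)) = (G ^ n) (ι k) := by
    intro m n
    induction m with
    | zero => simp
    | succ m ih =>
      intro k
      rw [← add_assoc, pow_succ_apply, pow_succ_apply', hGV, ih]
  -- Finitely many terms can be brought to a common power of `G`.
  have hrep : ∀ a, ∃ N k, powSum G ι a = (G ^ N) (ι k) ∧ f a = (G ^ N) (G (ι (A k))) := by
    intro a
    induction a using Finsupp.induction_linear with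
    | zero => exact ⟨0, 0, by simp, by simp⟩
    | add a b ha hb =>
      obtain ⟨N, k, h1, h2⟩ := ha
      obtain ⟨N', k', h1', h2'⟩ := hb
      refine ⟨N + N', (V ^ N') k + (V ^ N) k', ?_, ?_⟩
      · rw [map_add, map_add, map_add, hshift, add_comm N N', hshift, h1, h1']
      · have e1 := hshift N' (N + 1) (A k)
        have e2 := hshift N (N' + 1) (A k')
        rw [show N + 1 + N' = N + N' + 1 by ring] at e1
        rw [show N' + 1 + N = N + N' + 1 by ring] at e2
        rw [map_add f, h2, h2']
        simp only [map_add, hAVp]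
        rw [pow_succ_apply, pow_succ_apply] at e1 e2
        rw [e1, e2]
    | single n k => exact ⟨n, k, powSum_single _ _ _ _, powSum_single _ _ _ _⟩
  have hnorm : ∀ a, ‖f a‖ = ‖powSum G ι a‖ := by
    intro a
    obtain ⟨N, k, h1, h2⟩ := hrep a
    rw [h1, h2, norm_pow_apply hG, norm_pow_apply hG, hG, hι, hι, hA]
  have hS : ∀ a, f.extendOfNorm (powSum G ι) (powSum G ι a) = f a :=
    LinearMap.extendOfNorm_eq hd ⟨1, fun a => by rw [hnorm, one_mul]⟩
  refine ⟨f.extendOfNorm (powSum G ι), fun x => ?_, fun n k => ?_⟩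
  · refine hd.induction_on (p := fun x => ‖f.extendOfNorm (powSum G ι) x‖ = ‖x‖) x
      (isClosed_eq (by fun_prop) (by fun_prop)) fun a => ?_
    rw [hS, hnorm]
  · rw [← powSum_single, hS]
    exact powSum_single _ _ _ _

/-- Commuting isometries `V₁, V₂` on `K` are inverted on `K ⊆ E` by commuting isometries `S₁, S₂`
of a larger space `E`. -/
lemma exists_commuting_extension (V1 V2 : K →L[ℂ] K) (h1 : adjoint V1 ∘L V1 = 1)
    (h2 : adjoint V2 ∘L V2 = 1) (hc : V1 ∘L V2 = V2 ∘L V1) :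
    ∃ (E : Type u) (_ : NormedAddCommGroup E) (_ : InnerProductSpace ℂ E) (_ : CompleteSpace E)
      (ι : K →L[ℂ] E) (S1 S2 : E →L[ℂ] E),
      (∀ k, ‖ι k‖ = ‖k‖) ∧ (∀ x, ‖S1 x‖ = ‖x‖) ∧ (∀ x, ‖S2 x‖ = ‖x‖) ∧ S1 ∘L S2 = S2 ∘L S1 ∧
      (∀ k, S1 (ι (V1 k)) = ι k) ∧ ∀ k, S2 (ι (V2 k)) = ι k := by
  have hc' : ∀ k, V1 (V2 k) = V2 (V1 k) := fun k => DFunLike.congr_fun hc k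
  have hn1 := isometry_of_adjoint h1
  have hn2 := isometry_of_adjoint h2
  obtain ⟨E, _, _, _, ι, G, hι, hG, hGV, hd⟩ :=
    exists_minimal_inverting_isometry (V1 ∘L V2)
      ((norm_map_iff_adjoint_comp_self _).1 fun k => by simp [hn1, hn2])
  obtain ⟨S1, hS1, hS1'⟩ := exists_induced_isometry hι hG hGV hd hn2 (fun k => by simp [hc'])
  obtain ⟨S2, hS2, hS2'⟩ := exists_induced_isometry hι hG hGV hd hn1 (fun k => by simp [hc'])
  have hGV1 : ∀ k, G (ι (V1 (V2 k))) = ι k := hGV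
  refine ⟨E, inferInstance, inferInstance, inferInstance, ι, S1, S2, hι, hS1, hS2, ?_, fun k => ?_, fun k => ?_⟩
  · refine ext_of_powSum_dense hd fun n k => ?_
    have e : ∀ x, (G ^ n) (G x) = (G ^ (n + 1)) x := fun x => (pow_succ_apply G n x).symm
    simp only [comp_apply, hS1', hS2', e, hc']
  · have := hS1' 0 (V1 k)
    simpa [← hc', hGV1] using this
  · have := hS2' 0 (V2 k)
    simpa [hGV1] using this

end Extension

/-! ### The lift of the adjoint pair -/

section Adjoint

variable {H K E : Type u} [NormedAddCommGroup H] [InnerProductSpace ℂ H]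
  [NormedAddCommGroup K] [InnerProductSpace ℂ K]
  [NormedAddCommGroup E] [InnerProductSpace ℂ E]

/-- If `V` leaves `K ⊖ ran Π` invariant, the closed span of all `Gⁿ ι Π h` is orthogonal to
`ι (K ⊖ ran Π)`. -/
lemma powSpan_orthogonal {P : H →L[ℂ] K} {V : K →L[ℂ] K} {ι : K →L[ℂ] E} {G : E →L[ℂ] E}
    (hι : ∀ k, ‖ι k‖ = ‖k‖) (hG : ∀ x, ‖G x‖ = ‖x‖) (hGV : ∀ k, G (ι (V k)) = ι k)
    (hVM : ∀ k, (∀ h, inner ℂ (P h) k = 0) → ∀ h, inner ℂ (P h) (V k) = 0)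
    {x : E} (hx : x ∈ powSpan G (ι ∘L P)) {k : K} (hk : ∀ h, inner ℂ (P h) k = 0) :
    inner ℂ x (ι k) = 0 := by
  have key : ∀ n h k, (∀ h, inner ℂ (P h) k = 0) → inner ℂ ((G ^ n) ((ι ∘L P) h)) (ι k) = 0 := by
    intro n h
    induction n with
    | zero => intro k hk; exact (inner_map_of_norm hι _ _).trans (hk h)
    | succ n ih =>
      intro k hk
      rw [pow_succ_apply', ← hGV, inner_map_of_norm hG]
      exact ih _ (hVM k hk)
  have hle : powSpan G (ι ∘L P) ≤ (ℂ ∙ ι k)ᗮ :=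
    powSpan_le (Submodule.isClosed_orthogonal _) fun n h => by
      rw [Submodule.mem_orthogonal_singleton_iff_inner_left]
      exact key n h k hk
  exact Submodule.mem_orthogonal_singleton_iff_inner_left.1 (hle hx)

/-- Here `A` and `B` are the two factors of `V`, and `S` inverts `A` on `ι K`. Strong minimality
places `S ι Π h = G ι B Π h` in the closed span of all `Gⁿ ι Π h`. -/
lemma extension_mem [CompleteSpace E] {P : H →L[ℂ] K} {V A B : K →L[ℂ] K}
    {ι : K →L[ℂ] E} {G S : E →L[ℂ] E}
    (hι : ∀ k, ‖ι k‖ = ‖k‖) (hG : ∀ x, ‖G x‖ = ‖x‖) (hGV : ∀ k, G (ι (V k)) = ι k)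
    (hVM : ∀ k, (∀ h, inner ℂ (P h) k = 0) → ∀ h, inner ℂ (P h) (V k) = 0)
    (hAM : ∀ k, (∀ h, inner ℂ (P h) k = 0) → ∀ h, inner ℂ (P h) (A k) = 0)
    (hM : ∀ k, ∃ h0, ∀ h, inner ℂ (P h) (k - P h0) = 0)
    (hS : ∀ x, ‖S x‖ = ‖x‖) (hSA : ∀ k, S (ι (A k)) = ι k) (hSB : ∀ k, S (ι k) = G (ι (B k)))
    (hmin : Dense (↑(Submodule.span ℂ (⋃ n : ℕ, ⇑(V ^ n) '' Set.range ⇑P)) : Set K))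
    (h : H) : S (ι (P h)) ∈ powSpan G (ι ∘L P) := by
  have : CompleteSpace (powSpan G (ι ∘L P)) := (isClosed_powSpan G _).completeSpace_coe
  set L := powSpan G (ι ∘L P) with hL
  set y := S (ι (P h)) with hy
  set z := y - L.starProjection y with hz
  have hpL : L.starProjection y ∈ L := Submodule.starProjection_apply_mem L y
  have hzL : ∀ x ∈ L, inner ℂ z x = 0 := fun x hx =>
    (Submodule.mem_orthogonal' L z).1 (Submodule.sub_starProjection_mem_orthogonal y) x hx
  have hzM : ∀ k, (∀ h, inner ℂ (P h) k = 0) → inner ℂ z (ι k) = 0 := by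
    intro k hk
    rw [hz, inner_sub_left, powSpan_orthogonal hι hG hGV hVM hpL hk, hy, ← hSA k,
      inner_map_of_norm hS, inner_map_of_norm hι, hAM k hk, sub_zero]
  have hzK : ∀ k, inner ℂ z (ι k) = 0 := by
    intro k
    obtain ⟨h0, hh0⟩ := hM k
    have e : ι k = ι (k - P h0) + (ι ∘L P) h0 := by simp
    rw [e, inner_add_right, hzM _ hh0, hzL _ (base_mem_powSpan G _ h0), add_zero]
  -- By strong minimality, `G ι K` is the closed span of `G ι Π H` and `G ι V (Vⁿ Π H) ⊆ ι K`.
  have hzGK : ∀ k, inner ℂ z (G (ι k)) = 0 := by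
    have hspan : ∀ k ∈ Submodule.span ℂ (⋃ n : ℕ, ⇑(V ^ n) '' Set.range ⇑P),
        inner ℂ z (G (ι k)) = 0 := by
      intro k hk
      induction hk using Submodule.span_induction with
      | mem k hk =>
        simp only [Set.mem_iUnion] at hk
        obtain ⟨n, _, ⟨h', rfl⟩, rfl⟩ := hk
        cases n with
        | zero => exact hzL _ (apply_mem_powSpan G _ _ (base_mem_powSpan G (ι ∘L P) h'))
        | succ n => rw [pow_succ_apply', hGV, hzK]
      | zero => simp
      | add a b _ _ ha hb => rw [map_add, map_add, inner_add_right, ha, hb, add_zero]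
      | smul c a _ ha => rw [map_smul, map_smul, inner_smul_right, ha, mul_zero]
    intro k
    exact hmin.induction hspan (isClosed_eq (by fun_prop) (by fun_prop)) k
  have hzz : inner ℂ z z = 0 := by
    conv_lhs => rw [hz, inner_sub_right]
    rw [← hz, hzL _ hpL, hy, hSB, hzGK, sub_zero]
  have hz0 : z = 0 := inner_self_eq_zero.1 hzz
  rw [sub_eq_zero.1 hz0]
  exact hpL

end Adjoint

lemma hasStronglyMinimalAndoLift_adjoint {H : Type u}
    [NormedAddCommGroup H] [InnerProductSpace ℂ H] [CompleteSpace H] (T1 T2 : H →L[ℂ] H)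
    (hT : HasStronglyMinimalAndoLift T1 T2) :
    HasStronglyMinimalAndoLift (adjoint T1) (adjoint T2) := by
  obtain ⟨K, _, _, _, P, V1, V2, ⟨hP, hV1, hV2, hc, hT1, hT2⟩, hmin⟩ := hT
  obtain ⟨E, _, _, _, ι, S1, S2, hι, hS1, hS2, hS, hSV1, hSV2⟩ :=
    exists_commuting_extension V1 V2 hV1 hV2 hc
  have hc' : ∀ k, V1 (V2 k) = V2 (V1 k) := fun k => DFunLike.congr_fun hc k
  have hS' : ∀ x, S1 (S2 x) = S2 (S1 x) := fun x => DFunLike.congr_fun hS x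
  have hT1' : ∀ h, adjoint V1 (P h) = P (adjoint T1 h) := fun h => DFunLike.congr_fun hT1 h
  have hT2' : ∀ h, adjoint V2 (P h) = P (adjoint T2 h) := fun h => DFunLike.congr_fun hT2 h
  have hM1 : ∀ k, (∀ h, inner ℂ (P h) k = 0) → ∀ h, inner ℂ (P h) (V1 k) = 0 :=
    fun k hk h => by rw [← adjoint_inner_left, hT1', hk]
  have hM2 : ∀ k, (∀ h, inner ℂ (P h) k = 0) → ∀ h, inner ℂ (P h) (V2 k) = 0 :=
    fun k hk h => by rw [← adjoint_inner_left, hT2', hk]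
  have hVM : ∀ k, (∀ h, inner ℂ (P h) k = 0) → ∀ h, inner ℂ (P h) ((V1 ∘L V2) k) = 0 :=
    fun k hk => hM1 _ (hM2 k hk)
  -- `P* k` is the component of `k` in `ran P`.
  have hM : ∀ k, ∃ h0, ∀ h, inner ℂ (P h) (k - P h0) = 0 := fun k =>
    ⟨adjoint P k, fun h => by
      rw [inner_sub_right, inner_map_of_norm hP, adjoint_inner_right, sub_self]⟩
  have hG : ∀ x, ‖(S1 ∘L S2) x‖ = ‖x‖ := fun x => by simp [hS1, hS2]
  have hGV : ∀ k, (S1 ∘L S2) (ι ((V1 ∘L V2) k)) = ι k := fun k => by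
    simp only [comp_apply]; rw [hc', hSV2, hSV1]
  have hm1 : ∀ x ∈ powSpan (S1 ∘L S2) (ι ∘L P), S1 x ∈ powSpan (S1 ∘L S2) (ι ∘L P) :=
    map_mem_powSpan (fun x => by simp only [comp_apply]; rw [hS'])
      (extension_mem (B := V2) hι hG hGV hVM hM1 hM hS1 hSV1
        (fun k => by simp only [comp_apply]; rw [hSV2]) hmin)
  have hm2 : ∀ x ∈ powSpan (S1 ∘L S2) (ι ∘L P), S2 x ∈ powSpan (S1 ∘L S2) (ι ∘L P) :=
    map_mem_powSpan (fun x => by simp only [comp_apply]; rw [← hS', hS'])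
      (extension_mem (B := V1) hι hG hGV hVM hM2 hM hS2 hSV2
        (fun k => by simp only [comp_apply]; rw [hS', hSV1]) hmin)
  have : CompleteSpace (powSpan (S1 ∘L S2) (ι ∘L P)) :=
    (isClosed_powSpan _ _).completeSpace_coe
  -- The intertwining relation `(S|L)* ι P = ι P T`, from `V P h - P T h ⟂ ran P`.
  have hlift : ∀ (S : E →L[ℂ] E) (V : K →L[ℂ] K) (T : H →L[ℂ] H)
      (hm : ∀ x ∈ powSpan (S1 ∘L S2) (ι ∘L P), S x ∈ powSpan (S1 ∘L S2) (ι ∘L P)),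
      (∀ x, ‖S x‖ = ‖x‖) → (∀ k, S (ι (V k)) = ι k) → (∀ h, adjoint V (P h) = P (adjoint T h)) →
      adjoint (S.restrict hm) ∘L ((ι ∘L P).codRestrict _ (base_mem_powSpan (S1 ∘L S2) (ι ∘L P))) =
        ((ι ∘L P).codRestrict _ (base_mem_powSpan (S1 ∘L S2) (ι ∘L P))) ∘L
          adjoint (adjoint T) := by
    intro S V T hm hSn hSV hVT
    ext1 h
    refine ext_inner_left ℂ fun x => ?_
    rw [comp_apply, adjoint_inner_right, adjoint_adjoint]
    change inner ℂ (S x) (ι (P h)) = inner ℂ (x : E) (ι (P (T h)))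
    have h0 : inner ℂ (x : E) (ι (V (P h) - P (T h))) = 0 :=
      powSpan_orthogonal hι hG hGV hVM x.2 fun h' => by
        rw [inner_sub_right, ← adjoint_inner_left, hVT, inner_map_of_norm hP,
          inner_map_of_norm hP, adjoint_inner_left, sub_self]
    rw [map_sub, inner_sub_right, sub_eq_zero] at h0
    rw [← h0, ← hSV (P h), inner_map_of_norm hSn]
  refine ⟨powSpan (S1 ∘L S2) (ι ∘L P), inferInstance, inferInstance, this,
    (ι ∘L P).codRestrict _ (base_mem_powSpan (S1 ∘L S2) (ι ∘L P)),
    S1.restrict hm1, S2.restrict hm2, ⟨fun h => (hι _).trans (hP h),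
      (norm_map_iff_adjoint_comp_self _).1 fun x => hS1 x,
      (norm_map_iff_adjoint_comp_self _).1 fun x => hS2 x,
      by ext x; exact hS' x,
      hlift S1 V1 T1 hm1 hS1 hSV1 hT1', hlift S2 V2 T2 hm2 hS2 hSV2 hT2'⟩, ?_⟩
  refine (denseRange_powSum_restrict (S1 ∘L S2) (ι ∘L P)).mono ?_
  rintro _ ⟨a, rfl⟩
  refine powSum_mem (fun n h => Submodule.subset_span (Set.mem_iUnion.2 ⟨n, ?_⟩)) a
  exact ⟨_, ⟨h, rfl⟩, rfl⟩

theorem stmt_17 {H : Type u}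
    [NormedAddCommGroup H] [InnerProductSpace ℂ H] [CompleteSpace H]
    (T1 T2 : H →L[ℂ] H) (h1 : ‖T1‖ ≤ 1) (h2 : ‖T2‖ ≤ 1)
    (hc : T1 ∘L T2 = T2 ∘L T1) :
    HasStronglyMinimalAndoLift T1 T2 ↔
      HasStronglyMinimalAndoLift (adjoint T1) (adjoint T2) := by
  refine ⟨hasStronglyMinimalAndoLift_adjoint T1 T2, fun h => ?_⟩
  simpa only [adjoint_adjoint] using hasStronglyMinimalAndoLift_adjoint _ _ h
end

section
/- Let (T1, T2) be a pair of commuting contractions on a complex Hilbert space H and set T = T1 T2. Then H decomposes as an orthogonal direct sum H = H_u ⊕ H_c of closed subspaces, each invariant under all of T1, T1*, T2, T2* (i.e. reducing for both T1 and T2), such that the restriction of T to H_u is unitary and the restriction of T to H_c is a completely nonunitary contraction. Consequently this decomposition coincides with the Sz.-Nagy–Foias canonical decomposition of the single contraction T = T1 T2. -/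
/-!
The unitary part of the contraction `T = T1 T2` is the subspace of those `x` on which all powers of
`T` and of `T*` preserve the norm. For a contraction `C`, `‖C x‖ = ‖x‖` is equivalent to
`C* C x = x` (`adjoint_apply_self_of_norm_eq`), so this is a closed linear subspace, and it
contains every reducing subspace on which `T` is unitary.

The point is that it reduces each factor (`norm_preserved_factor`). Let `T = A B = B A` and let `x`
be in the unitary part. The chain `‖x‖ = ‖Tⁿ⁺¹ x‖ = ‖B Tⁿ A x‖ ≤ ‖Tⁿ A x‖ ≤ ‖A x‖ ≤ ‖x‖` consists of
equalities, which handles the powers of `T` at `A x`. For the powers of `T*`, put `y = T*ⁿ x`;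
then `x = Tⁿ y`, so `T*ⁿ A x = T*ⁿ Tⁿ A y = A y`, which has norm `‖y‖ = ‖x‖` by the same chain
applied to `y`. The adjoints of the factors are covered because the unitary part is symmetric in
`T` and `T*`.
-/

open ContinuousLinearMap

section UnitaryPart

set_option linter.unusedSectionVars false

variable {H : Type*} [NormedAddCommGroup H] [InnerProductSpace ℂ H] [CompleteSpace H]

lemma clm_mul_apply (A B : H →L[ℂ] H) (x : H) : (A * B) x = A (B x) := rfl

lemma contraction_apply_le {C : H →L[ℂ] H} (hC : ‖C‖ ≤ 1) (x : H) : ‖C x‖ ≤ ‖x‖ := by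
  simpa using C.le_of_opNorm_le hC x

lemma contraction_pow {C : H →L[ℂ] H} (hC : ‖C‖ ≤ 1) (n : ℕ) : ‖C ^ n‖ ≤ 1 := by
  induction n with
  | zero => exact norm_id_le (𝕜 := ℂ) (E := H)
  | succ n ih =>
    rw [pow_succ]
    exact (norm_mul_le _ _).trans (mul_le_one₀ ih (norm_nonneg _) hC)

lemma contraction_adjoint {C : H →L[ℂ] H} (hC : ‖C‖ ≤ 1) : ‖adjoint C‖ ≤ 1 := by
  rwa [LinearIsometryEquiv.norm_map]

lemma adjoint_pow_eq (C : H →L[ℂ] H) (n : ℕ) : adjoint (C ^ n) = adjoint C ^ n := by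
  simp only [← star_eq_adjoint, star_pow]

/-- Expanding the square gives `‖C* C x - x‖² ≤ ‖x‖² - 2 ‖C x‖² + ‖x‖² = 0`. -/
lemma adjoint_apply_self_of_norm_eq {C : H →L[ℂ] H} (hC : ‖C‖ ≤ 1) {x : H}
    (hx : ‖C x‖ = ‖x‖) : adjoint C (C x) = x := by
  have h := @norm_sub_sq ℂ H _ _ _ (adjoint C (C x)) x
  have h3 : ‖adjoint C (C x)‖ ≤ ‖x‖ :=
    (contraction_apply_le (contraction_adjoint hC) _).trans hx.le
  rw [adjoint_inner_left, inner_self_eq_norm_sq, hx] at h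
  have h4 : ‖adjoint C (C x) - x‖ ^ 2 ≤ 0 := by
    nlinarith [norm_nonneg (adjoint C (C x))]
  have h5 : ‖adjoint C (C x) - x‖ = 0 := by
    simpa using le_antisymm h4 (sq_nonneg _)
  exact sub_eq_zero.mp (norm_eq_zero.mp h5)

lemma norm_eq_iff_adjoint_apply {C : H →L[ℂ] H} (hC : ‖C‖ ≤ 1) (x : H) :
    ‖C x‖ = ‖x‖ ↔ adjoint C (C x) = x := by
  refine ⟨adjoint_apply_self_of_norm_eq hC, fun h => ?_⟩
  refine le_antisymm (contraction_apply_le hC x) ?_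
  calc ‖x‖ = ‖adjoint C (C x)‖ := by rw [h]
    _ ≤ ‖C x‖ := contraction_apply_le (contraction_adjoint hC) _

/-- The vectors on which a contraction preserves the norm; the contraction hypothesis makes this
set a linear subspace. -/
def normFixed (C : H →L[ℂ] H) (hC : ‖C‖ ≤ 1) : Submodule ℂ H where
  carrier := {x | ‖C x‖ = ‖x‖}
  zero_mem' := by simp
  add_mem' {x y} hx hy := by
    simp only [Set.mem_ofPred_eq, norm_eq_iff_adjoint_apply hC] at *
    simp [hx, hy]
  smul_mem' c x hx := by
    simp only [Set.mem_ofPred_eq] at *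
    simp [norm_smul, hx]

/-- The unitary part of a contraction `T`: the vectors whose norm is preserved by all powers
of `T` and of `T*`. -/
noncomputable def unitaryPart (T : H →L[ℂ] H) (hT : ‖T‖ ≤ 1) : Submodule ℂ H :=
  ⨅ n : ℕ, normFixed (T ^ n) (contraction_pow hT n) ⊓
    normFixed (adjoint T ^ n) (contraction_pow (contraction_adjoint hT) n)

lemma mem_unitaryPart {T : H →L[ℂ] H} {hT : ‖T‖ ≤ 1} {x : H} :
    x ∈ unitaryPart T hT ↔ ∀ n : ℕ, ‖(T ^ n) x‖ = ‖x‖ ∧ ‖(adjoint T ^ n) x‖ = ‖x‖ := by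
  simp only [unitaryPart, Submodule.mem_iInf, Submodule.mem_inf]
  rfl

lemma isClosed_unitaryPart (T : H →L[ℂ] H) (hT : ‖T‖ ≤ 1) :
    IsClosed (unitaryPart T hT : Set H) := by
  have h : (unitaryPart T hT : Set H) =
      ⋂ n : ℕ, {x | ‖(T ^ n) x‖ = ‖x‖} ∩ {x | ‖(adjoint T ^ n) x‖ = ‖x‖} := by
    ext x
    simp [mem_unitaryPart]
  rw [h]
  exact isClosed_iInter fun n =>
    (isClosed_eq (by fun_prop) (by fun_prop)).inter (isClosed_eq (by fun_prop) (by fun_prop))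

/-- If `Tⁿ⁺¹` preserves the norm of `y`, where `T = A B = B A`, then so do `A` and `Tⁿ A`. -/
lemma norm_factor_chain {A B T : H →L[ℂ] H} (hA : ‖A‖ ≤ 1) (hB : ‖B‖ ≤ 1) (hT : ‖T‖ ≤ 1)
    (hBA : T = B * A) (hAB : T = A * B) {n : ℕ} {y : H} (hy : ‖(T ^ (n + 1)) y‖ = ‖y‖) :
    ‖(T ^ n) (A y)‖ = ‖y‖ ∧ ‖A y‖ = ‖y‖ := by
  have hcomm : Commute T B := by
    show T * B = B * T
    conv_lhs => rw [hBA]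
    conv_rhs => rw [hAB]
    rw [mul_assoc]
  have e : (T ^ (n + 1)) y = B ((T ^ n) (A y)) := by
    have : T ^ (n + 1) = B * (T ^ n * A) := by
      rw [pow_succ, ← mul_assoc, ← (hcomm.pow_left n).eq, mul_assoc, ← hBA]
    rw [this]
    rfl
  have i1 := contraction_apply_le hB ((T ^ n) (A y))
  have i2 := contraction_apply_le (contraction_pow hT n) (A y)
  have i3 := contraction_apply_le hA y
  rw [← e, hy] at i1
  exact ⟨le_antisymm (i2.trans i3) i1, le_antisymm i3 (i1.trans i2)⟩

/-- The unitary part of a product of commuting contractions is invariant under each factor. -/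
lemma norm_preserved_factor {A B T : H →L[ℂ] H} (hA : ‖A‖ ≤ 1) (hB : ‖B‖ ≤ 1) (hT : ‖T‖ ≤ 1)
    (hBA : T = B * A) (hAB : T = A * B) {x : H} (hx : x ∈ unitaryPart T hT) :
    A x ∈ unitaryPart T hT := by
  rw [mem_unitaryPart] at hx ⊢
  have hAx : ‖A x‖ = ‖x‖ := (norm_factor_chain (n := 0) hA hB hT hBA hAB (hx 1).1).2
  intro n
  refine ⟨(norm_factor_chain hA hB hT hBA hAB (hx (n + 1)).1).1.trans hAx.symm, ?_⟩
  set y := (adjoint T ^ n) x with hydef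
  have hyx : ‖y‖ = ‖x‖ := (hx n).2
  have hTy : (T ^ n) y = x := by
    have := adjoint_apply_self_of_norm_eq (contraction_pow (contraction_adjoint hT) n) (hx n).2
    rwa [adjoint_pow_eq, adjoint_adjoint] at this
  have hy : ‖(T ^ (n + 1)) y‖ = ‖y‖ := by
    have h1 := (hx 1).1
    rw [pow_one] at h1
    rw [pow_succ', clm_mul_apply, hTy, h1, hyx]
  obtain ⟨c1, c2⟩ := norm_factor_chain hA hB hT hBA hAB hy
  have hcomm : Commute T A := by
    show T * A = A * T
    conv_lhs => rw [hAB]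
    conv_rhs => rw [hBA]
    rw [mul_assoc]
  have hAx' : A x = (T ^ n) (A y) := by
    rw [← clm_mul_apply (T ^ n) A y, (hcomm.pow_left n).eq, clm_mul_apply, hTy]
  have h := adjoint_apply_self_of_norm_eq (contraction_pow hT n) (c1.trans c2.symm)
  rw [adjoint_pow_eq] at h
  rw [hAx, hAx', h, c2, hyx]

lemma unitaryPart_adjoint (T : H →L[ℂ] H) (hT : ‖T‖ ≤ 1) :
    unitaryPart (adjoint T) (contraction_adjoint hT) = unitaryPart T hT := by
  ext x
  simp only [mem_unitaryPart, adjoint_adjoint, and_comm]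

lemma image_unitaryPart {T : H →L[ℂ] H} {hT : ‖T‖ ≤ 1}
    (hinv : ∀ x ∈ unitaryPart T hT, T x ∈ unitaryPart T hT)
    (hinv' : ∀ x ∈ unitaryPart T hT, adjoint T x ∈ unitaryPart T hT) :
    ⇑T '' (unitaryPart T hT : Set H) = (unitaryPart T hT : Set H) := by
  apply Set.Subset.antisymm
  · rintro _ ⟨x, hx, rfl⟩
    exact hinv x hx
  · intro x hx
    have h := (mem_unitaryPart.mp hx 1).2
    rw [pow_one] at h
    have := adjoint_apply_self_of_norm_eq (contraction_adjoint hT) h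
    rw [adjoint_adjoint] at this
    exact ⟨_, hinv' x hx, this⟩

lemma pow_norm_eq_of_invariant {C : H →L[ℂ] H} {M : Submodule ℂ H} (hinv : ∀ x ∈ M, C x ∈ M)
    (hn : ∀ x ∈ M, ‖C x‖ = ‖x‖) (n : ℕ) : ∀ x ∈ M, ‖(C ^ n) x‖ = ‖x‖ := by
  induction n with
  | zero => simp
  | succ n ih =>
    intro x hx
    rw [pow_succ, clm_mul_apply, ih _ (hinv x hx), hn x hx]

/-- A reducing subspace mapped isometrically onto itself by `T` lies in the unitary part. -/
lemma le_unitaryPart {T : H →L[ℂ] H} {hT : ‖T‖ ≤ 1} {M : Submodule ℂ H}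
    (hinv : ∀ x ∈ M, T x ∈ M) (hinv' : ∀ x ∈ M, adjoint T x ∈ M)
    (hn : ∀ x ∈ M, ‖T x‖ = ‖x‖) (him : ⇑T '' (M : Set H) = (M : Set H)) :
    M ≤ unitaryPart T hT := by
  have hn' : ∀ x ∈ M, ‖adjoint T x‖ = ‖x‖ := by
    intro x hx
    obtain ⟨y, hy, rfl⟩ : x ∈ ⇑T '' (M : Set H) := by rw [him]; exact hx
    rw [adjoint_apply_self_of_norm_eq hT (hn y hy), hn y hy]
  intro x hx
  exact mem_unitaryPart.mpr fun n =>
    ⟨pow_norm_eq_of_invariant hinv hn n x hx, pow_norm_eq_of_invariant hinv' hn' n x hx⟩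

lemma orthogonal_invariant {C D : H →L[ℂ] H} {M : Submodule ℂ H}
    (hCD : ∀ x y, inner ℂ x (C y) = inner ℂ (D x) y) (hinv : ∀ x ∈ M, D x ∈ M) :
    ∀ x ∈ Mᗮ, C x ∈ Mᗮ := by
  intro x hx
  rw [Submodule.mem_orthogonal] at hx ⊢
  intro u hu
  rw [hCD]
  exact hx _ (hinv u hu)

end UnitaryPart

theorem stmt_18 {H : Type*}
    [NormedAddCommGroup H] [InnerProductSpace ℂ H] [CompleteSpace H]
    (T1 T2 : H →L[ℂ] H) (h1 : ‖T1‖ ≤ 1) (h2 : ‖T2‖ ≤ 1)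
    (hc : T1 ∘L T2 = T2 ∘L T1) :
    ∃ Hu : Submodule ℂ H,
      IsClosed (Hu : Set H) ∧
      (∀ x ∈ Hu, T1 x ∈ Hu ∧ adjoint T1 x ∈ Hu ∧ T2 x ∈ Hu ∧ adjoint T2 x ∈ Hu) ∧
      (∀ x ∈ Huᗮ, T1 x ∈ Huᗮ ∧ adjoint T1 x ∈ Huᗮ ∧ T2 x ∈ Huᗮ ∧ adjoint T2 x ∈ Huᗮ) ∧
      (∀ x ∈ Hu, ‖(T1 ∘L T2) x‖ = ‖x‖) ∧
      ⇑(T1 ∘L T2) '' (Hu : Set H) = (Hu : Set H) ∧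
      (∀ M : Submodule ℂ H, IsClosed (M : Set H) → M ≤ Huᗮ →
        (∀ x ∈ M, (T1 ∘L T2) x ∈ M) → (∀ x ∈ M, adjoint (T1 ∘L T2) x ∈ M) →
        (∀ x ∈ M, ‖(T1 ∘L T2) x‖ = ‖x‖) →
        ⇑(T1 ∘L T2) '' (M : Set H) = (M : Set H) → M = ⊥) ∧
      (∀ M : Submodule ℂ H, IsClosed (M : Set H) →
        (∀ x ∈ M, (T1 ∘L T2) x ∈ M) → (∀ x ∈ M, adjoint (T1 ∘L T2) x ∈ M) →
        (∀ x ∈ M, ‖(T1 ∘L T2) x‖ = ‖x‖) →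
        ⇑(T1 ∘L T2) '' (M : Set H) = (M : Set H) → M ≤ Hu) := by
  have hT : ‖T1 ∘L T2‖ ≤ 1 :=
    (opNorm_comp_le _ _).trans (mul_le_one₀ h1 (norm_nonneg _) h2)
  have ha : adjoint (T1 ∘L T2) = adjoint T2 * adjoint T1 := adjoint_comp _ _
  have ha' : adjoint (T1 ∘L T2) = adjoint T1 * adjoint T2 := by
    rw [hc]
    exact adjoint_comp _ _
  have g1 := contraction_adjoint h1
  have g2 := contraction_adjoint h2
  have i1 : ∀ x ∈ unitaryPart _ hT, T1 x ∈ unitaryPart _ hT :=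
    fun x hx => norm_preserved_factor h1 h2 hT hc rfl hx
  have i2 : ∀ x ∈ unitaryPart _ hT, T2 x ∈ unitaryPart _ hT :=
    fun x hx => norm_preserved_factor h2 h1 hT rfl hc hx
  have j1 : ∀ x ∈ unitaryPart _ hT, adjoint T1 x ∈ unitaryPart _ hT := by
    rw [← unitaryPart_adjoint]
    exact fun x hx => norm_preserved_factor g1 g2 _ ha ha' hx
  have j2 : ∀ x ∈ unitaryPart _ hT, adjoint T2 x ∈ unitaryPart _ hT := by
    rw [← unitaryPart_adjoint]
    exact fun x hx => norm_preserved_factor g2 g1 _ ha' ha hx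
  refine ⟨unitaryPart _ hT, isClosed_unitaryPart _ hT,
    fun x hx => ⟨i1 x hx, j1 x hx, i2 x hx, j2 x hx⟩,
    fun x hx => ⟨?_, ?_, ?_, ?_⟩, fun x hx => ?_, ?_, ?_, ?_⟩
  · exact orthogonal_invariant (fun x y => (adjoint_inner_left T1 y x).symm) j1 x hx
  · exact orthogonal_invariant (fun x y => adjoint_inner_right T1 x y) i1 x hx
  · exact orthogonal_invariant (fun x y => (adjoint_inner_left T2 y x).symm) j2 x hx
  · exact orthogonal_invariant (fun x y => adjoint_inner_right T2 x y) i2 x hx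
  · simpa using (mem_unitaryPart.mp hx 1).1
  · refine image_unitaryPart (fun x hx => i1 _ (i2 _ hx)) (fun x hx => ?_)
    rw [ha]
    exact j2 _ (j1 _ hx)
  · intro M _ hM a b c d
    have hle := le_unitaryPart (hT := hT) a b c d
    exact le_bot_iff.mp ((le_inf hle hM).trans (Submodule.inf_orthogonal_eq_bot _).le)
  · exact fun M _ a b c d => le_unitaryPart a b c d
end

section
/- Let (T1, T2) be a pair of commuting contractions on a complex Hilbert space H and suppose (T1, T2) has some strongly minimal Andô lift. Then every minimal Andô lift of (T1, T2) is strongly minimal, and consequently any two minimal Andô lifts of (T1, T2) are unitarily equivalent as lifts. -/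
/-!
Write `V = V1 V2` and `T = T1 T2` for a lift `(Pi, V1, V2)`. Then `V` is an isometric lift of `T`, so
the Gram matrix of the vectors `V ^ n (Pi h)` depends only on `T` (`gram_pow`). Fixing a strongly
minimal lift on `K` and any Andô lift on `K'`, the correspondence `V ^ n (Pi h) ↦ V' ^ n (Pi' h)`
therefore extends to an isometry `W : K → K'` (`exists_isometry_of_gram`).

The main point is that `W (V1 (Pi h)) = V1' (Pi' h)` (`map_left_Pi`). Since `V1` is an isometry and
`V = V1 V2`, the inner products of `V1 (Pi h)` with the vectors `V ^ n (Pi k)` are also determined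
by the pair `(T1, T2)`; hence `W (V1 (Pi h))` is the orthogonal projection of `V1' (Pi' h)` onto the
range of `W`. Both vectors have norm `‖h‖`, so they agree. By symmetry the same holds for `V2`, so
`W` intertwines the two pairs; its range is then closed, contains the range of `Pi'` and is
invariant under `V1'` and `V2'`, and so it is all of `K'` when the second lift is minimal.

Thus every minimal lift is unitarily equivalent to the given strongly minimal one
(`exists_equiv_of_stronglyMinimal`), which yields both claims.
-/


open ContinuousLinearMap

universe u

/-- Minimality of a lift: the span of `⋃_{n1,n2} V1^{n1} V2^{n2} (range Pi)` is dense. -/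
def IsMinimalLift {H : Type u} {K : Type u}
    [NormedAddCommGroup H] [InnerProductSpace ℂ H]
    [NormedAddCommGroup K] [InnerProductSpace ℂ K]
    (Pi : H →L[ℂ] K) (V1 V2 : K →L[ℂ] K) : Prop :=
  Dense (↑(Submodule.span ℂ
    (⋃ (n1 : ℕ) (n2 : ℕ), ⇑((V1 ^ n1) ∘L (V2 ^ n2)) '' Set.range ⇑Pi)) : Set K)

/-- Two families with the same Gram matrix, the first of them total, are related by an isometry. -/
lemma exists_isometry_of_gram {ι K K' : Type*}
    [NormedAddCommGroup K] [InnerProductSpace ℂ K]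
    [NormedAddCommGroup K'] [InnerProductSpace ℂ K'] [CompleteSpace K']
    (v : ι → K) (w : ι → K')
    (hd : Dense (Submodule.span ℂ (Set.range v) : Set K))
    (hg : ∀ i j, inner ℂ (v i) (v j) = inner ℂ (w i) (w j)) :
    ∃ W : K →ₗᵢ[ℂ] K', ∀ i, W (v i) = w i := by
  set e := Finsupp.linearCombination ℂ v with he
  set f := Finsupp.linearCombination ℂ w with hf
  have hinner : ∀ x, inner ℂ (e x) (e x) = inner ℂ (f x) (f x) := by
    intro x
    simp only [he, hf, Finsupp.linearCombination_apply, Finsupp.sum, sum_inner, inner_sum,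
      inner_smul_left, inner_smul_right, hg]
  have hn : ∀ x, ‖f x‖ = ‖e x‖ := fun x => by
    rw [norm_eq_sqrt_re_inner (𝕜 := ℂ), norm_eq_sqrt_re_inner (𝕜 := ℂ), hinner]
  have hdense : DenseRange e := by
    rw [DenseRange, ← LinearMap.coe_range, Finsupp.range_linearCombination]
    exact hd
  have hb : ∃ C : ℝ, ∀ x, ‖f x‖ ≤ C * ‖e x‖ := ⟨1, fun x => by rw [hn, one_mul]⟩
  have hW : ∀ x, f.extendOfNorm e (e x) = f x := LinearMap.extendOfNorm_eq hdense hb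
  refine ⟨⟨(f.extendOfNorm e).toLinearMap, fun x => ?_⟩, fun i => ?_⟩
  · refine hdense.induction (P := fun x => ‖f.extendOfNorm e x‖ = ‖x‖) ?_
      (isClosed_eq (by fun_prop) (by fun_prop)) x
    rintro _ ⟨y, rfl⟩
    rw [hW, hn]
  · have := hW (Finsupp.single i 1)
    simpa [he, hf] using this

lemma clm_pow_zero_apply {K : Type*} [NormedAddCommGroup K] [InnerProductSpace ℂ K]
    (V : K →L[ℂ] K) (x : K) : (V ^ 0) x = x := by
  rw [pow_zero]
  rfl

lemma clm_pow_succ_apply {K : Type*} [NormedAddCommGroup K] [InnerProductSpace ℂ K]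
    (V : K →L[ℂ] K) (n : ℕ) (x : K) : (V ^ (n + 1)) x = (V ^ n) (V x) := by
  rw [pow_succ]
  rfl

lemma clm_pow_succ_apply' {K : Type*} [NormedAddCommGroup K] [InnerProductSpace ℂ K]
    (V : K →L[ℂ] K) (n : ℕ) (x : K) : (V ^ (n + 1)) x = V ((V ^ n) x) := by
  rw [pow_succ']
  rfl

/-- The truncated subtractions encode both cases: at most one of the two exponents on the right
is nonzero. -/
lemma gram_pow {H K : Type*}
    [NormedAddCommGroup H] [InnerProductSpace ℂ H]
    [NormedAddCommGroup K] [InnerProductSpace ℂ K] [CompleteSpace K]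
    (S : H →L[ℂ] H) (Pi : H →L[ℂ] K) (V : K →L[ℂ] K)
    (hPi : ∀ h k, inner ℂ (Pi h) (Pi k) = inner ℂ h k)
    (hV : ∀ x y, inner ℂ (V x) (V y) = inner ℂ x y)
    (hS : ∀ h, adjoint V (Pi h) = Pi (S h)) (m n : ℕ) (h k : H) :
    inner ℂ ((V ^ m) (Pi h)) ((V ^ n) (Pi k))
      = inner ℂ ((S ^ (n - m)) h) ((S ^ (m - n)) k) := by
  induction m generalizing n h k with
  | zero =>
    induction n generalizing h k with
    | zero => simp [hPi]
    | succ n ih =>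
      rw [clm_pow_succ_apply' V, ← adjoint_inner_left]
      simp only [clm_pow_zero_apply, hS]
      simpa [clm_pow_succ_apply] using ih (S h) k
  | succ m ih =>
    cases n with
    | zero =>
      rw [clm_pow_succ_apply' V, ← adjoint_inner_right]
      simp only [clm_pow_zero_apply, hS]
      simpa [clm_pow_succ_apply] using ih 0 h (S k)
    | succ n =>
      rw [clm_pow_succ_apply' V m, clm_pow_succ_apply' V n, hV, ih]
      simp

section AndoLift

variable {H K K' : Type u}
  [NormedAddCommGroup H] [InnerProductSpace ℂ H] [CompleteSpace H]
  [NormedAddCommGroup K] [InnerProductSpace ℂ K] [CompleteSpace K]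
  [NormedAddCommGroup K'] [InnerProductSpace ℂ K'] [CompleteSpace K']
  {T1 T2 : H →L[ℂ] H} {Pi : H →L[ℂ] K} {V1 V2 : K →L[ℂ] K}
  {Pi' : H →L[ℂ] K'} {V1' V2' : K' →L[ℂ] K'}

lemma IsAndoLift.swap (hl : IsAndoLift T1 T2 Pi V1 V2) : IsAndoLift T2 T1 Pi V2 V1 :=
  ⟨hl.1, hl.2.2.1, hl.2.1, hl.2.2.2.1.symm, hl.2.2.2.2.2, hl.2.2.2.2.1⟩

lemma IsAndoLift.inner_Pi (hl : IsAndoLift T1 T2 Pi V1 V2) (h k : H) :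
    inner ℂ (Pi h) (Pi k) = inner ℂ h k :=
  (LinearMap.norm_map_iff_inner_map_map Pi).1 hl.1 h k

lemma IsAndoLift.inner_left (hl : IsAndoLift T1 T2 Pi V1 V2) (x y : K) :
    inner ℂ (V1 x) (V1 y) = inner ℂ x y :=
  (inner_map_map_iff_adjoint_comp_self V1).2 hl.2.1 x y

lemma IsAndoLift.norm_left (hl : IsAndoLift T1 T2 Pi V1 V2) (x : K) : ‖V1 x‖ = ‖x‖ :=
  (norm_map_iff_adjoint_comp_self V1).2 hl.2.1 x

lemma IsAndoLift.adjoint_left (hl : IsAndoLift T1 T2 Pi V1 V2) (h : H) :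
    adjoint V1 (Pi h) = Pi (adjoint T1 h) :=
  DFunLike.congr_fun hl.2.2.2.2.1 h

lemma IsAndoLift.comm_apply (hl : IsAndoLift T1 T2 Pi V1 V2) (x : K) :
    V1 (V2 x) = V2 (V1 x) :=
  DFunLike.congr_fun hl.2.2.2.1 x

lemma IsAndoLift.pow_comm_apply (hl : IsAndoLift T1 T2 Pi V1 V2) (n : ℕ) (x : K) :
    V1 (((V1 ∘L V2) ^ n) x) = ((V1 ∘L V2) ^ n) (V1 x) := by
  have hcomm : Commute V1 (V1 ∘L V2) := by
    ext x
    simp [hl.comm_apply]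
  exact DFunLike.congr_fun (hcomm.pow_right n).eq x

/-- The Gram matrix of the vectors `(V1 V2) ^ n (Pi h)` is the same for all lifts. -/
lemma IsAndoLift.gram (hl : IsAndoLift T1 T2 Pi V1 V2) (m n : ℕ) (h k : H) :
    inner ℂ (((V1 ∘L V2) ^ m) (Pi h)) (((V1 ∘L V2) ^ n) (Pi k))
      = inner ℂ (((adjoint T2 ∘L adjoint T1) ^ (n - m)) h)
          (((adjoint T2 ∘L adjoint T1) ^ (m - n)) k) := by
  refine gram_pow _ Pi _ hl.inner_Pi (fun x y => ?_) (fun h => ?_) m n h k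
  · rw [comp_apply, comp_apply, hl.inner_left, hl.swap.inner_left]
  · rw [adjoint_comp, comp_apply, hl.adjoint_left, hl.swap.adjoint_left, comp_apply]

/-- The isometry matching the vectors `(V1 V2) ^ n (Pi h)` also matches the vectors `V1 (Pi h)`:
the inner products identify `W (V1 (Pi h))` as the orthogonal projection of `V1' (Pi' h)` onto the
range of `W`, and the two vectors have equal norms. -/
lemma map_left_Pi (hl : IsAndoLift T1 T2 Pi V1 V2) (hs : IsStronglyMinimalLift Pi V1 V2)
    (hl' : IsAndoLift T1 T2 Pi' V1' V2') (W : K →ₗᵢ[ℂ] K')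
    (hW : ∀ n h, W (((V1 ∘L V2) ^ n) (Pi h)) = ((V1' ∘L V2') ^ n) (Pi' h)) (h : H) :
    W (V1 (Pi h)) = V1' (Pi' h) := by
  have hW0 : ∀ h, W (Pi h) = Pi' h := fun h => by simpa using hW 0 h
  have key : innerSL ℂ (V1' (Pi' h)) ∘L W.toContinuousLinearMap = innerSL ℂ (V1 (Pi h)) := by
    refine ContinuousLinearMap.ext_on hs ?_
    intro x hx
    obtain ⟨n, _, ⟨k, rfl⟩, rfl⟩ := Set.mem_iUnion.1 hx
    simp only [comp_apply, innerSL_apply_apply, LinearIsometry.coe_toContinuousLinearMap, hW]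
    cases n with
    | zero =>
      rw [clm_pow_zero_apply, clm_pow_zero_apply, ← adjoint_inner_right V1,
        ← adjoint_inner_right V1', hl.adjoint_left, hl'.adjoint_left,
        hl.inner_Pi, hl'.inner_Pi]
    | succ n =>
      -- Cancel the common `V1` from `V1 (Pi h)` and `V1 V2 (V ^ n (Pi k))`, then move `V2` across.
      rw [clm_pow_succ_apply', clm_pow_succ_apply', comp_apply, comp_apply, hl.inner_left,
        hl'.inner_left, ← adjoint_inner_left V2, ← adjoint_inner_left V2', hl.swap.adjoint_left,
        hl'.swap.adjoint_left, ← hW, ← hW0, W.inner_map_map]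
  have h1 : inner ℂ (V1' (Pi' h)) (W (V1 (Pi h))) = inner ℂ (V1 (Pi h)) (V1 (Pi h)) := by
    simpa using DFunLike.congr_fun key (V1 (Pi h))
  have h2 : ‖V1' (Pi' h) - W (V1 (Pi h))‖ ^ 2 = 0 := by
    rw [norm_sub_sq (𝕜 := ℂ), h1, inner_self_eq_norm_sq, W.norm_map, hl.norm_left,
      hl'.norm_left, hl.1, hl'.1]
    ring
  exact (sub_eq_zero.1 (norm_eq_zero.1 (pow_eq_zero_iff two_ne_zero |>.1 h2))).symm

lemma map_left (hl : IsAndoLift T1 T2 Pi V1 V2) (hs : IsStronglyMinimalLift Pi V1 V2)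
    (hl' : IsAndoLift T1 T2 Pi' V1' V2') (W : K →ₗᵢ[ℂ] K')
    (hW : ∀ n h, W (((V1 ∘L V2) ^ n) (Pi h)) = ((V1' ∘L V2') ^ n) (Pi' h)) (x : K) :
    W (V1 x) = V1' (W x) := by
  have hV : W.toContinuousLinearMap ∘L (V1 ∘L V2)
      = (V1' ∘L V2') ∘L W.toContinuousLinearMap := by
    refine ContinuousLinearMap.ext_on hs ?_
    intro x hx
    obtain ⟨n, _, ⟨k, rfl⟩, rfl⟩ := Set.mem_iUnion.1 hx
    have := hW (n + 1) k
    rw [clm_pow_succ_apply', clm_pow_succ_apply', ← hW] at this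
    exact this
  have hVn : ∀ n x, W (((V1 ∘L V2) ^ n) x) = ((V1' ∘L V2') ^ n) (W x) := by
    intro n
    induction n with
    | zero => simp
    | succ n ih =>
      intro x
      rw [clm_pow_succ_apply, clm_pow_succ_apply, ih]
      exact congrArg _ (DFunLike.congr_fun hV x)
  have key : W.toContinuousLinearMap ∘L V1 = V1' ∘L W.toContinuousLinearMap := by
    refine ContinuousLinearMap.ext_on hs ?_
    intro x hx
    obtain ⟨n, _, ⟨k, rfl⟩, rfl⟩ := Set.mem_iUnion.1 hx
    simp only [comp_apply, LinearIsometry.coe_toContinuousLinearMap]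
    rw [hl.pow_comm_apply, hVn, map_left_Pi hl hs hl' W hW, hW, hl'.pow_comm_apply]
  exact DFunLike.congr_fun key x

lemma exists_equiv_of_stronglyMinimal
    (hl : IsAndoLift T1 T2 Pi V1 V2) (hs : IsStronglyMinimalLift Pi V1 V2)
    (hl' : IsAndoLift T1 T2 Pi' V1' V2') (hm' : IsMinimalLift Pi' V1' V2') :
    ∃ τ : K ≃ₗᵢ[ℂ] K', (∀ h, τ (Pi h) = Pi' h) ∧
      (∀ x, τ (V1 x) = V1' (τ x)) ∧ (∀ x, τ (V2 x) = V2' (τ x)) := by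
  obtain ⟨W, hW⟩ := exists_isometry_of_gram
    (fun i : ℕ × H => ((V1 ∘L V2) ^ i.1) (Pi i.2))
    (fun i : ℕ × H => ((V1' ∘L V2') ^ i.1) (Pi' i.2))
    (by
      refine hs.mono (Submodule.span_mono ?_)
      intro x hx
      obtain ⟨n, _, ⟨k, rfl⟩, rfl⟩ := Set.mem_iUnion.1 hx
      exact ⟨(n, k), rfl⟩)
    (fun i j => by rw [hl.gram, hl'.gram])
  replace hW : ∀ n h, W (((V1 ∘L V2) ^ n) (Pi h)) = ((V1' ∘L V2') ^ n) (Pi' h) :=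
    fun n h => hW (n, h)
  have hW0 : ∀ h, W (Pi h) = Pi' h := fun h => by simpa using hW 0 h
  have hW1 : ∀ x, W (V1 x) = V1' (W x) := map_left hl hs hl' W hW
  have hW2 : ∀ x, W (V2 x) = V2' (W x) := by
    refine map_left hl.swap ?_ hl'.swap W ?_
    · rw [IsStronglyMinimalLift, ← hl.2.2.2.1]
      exact hs
    · rw [← hl.2.2.2.1, ← hl'.2.2.2.1]
      exact hW
  have hpow : ∀ (A : K →L[ℂ] K) (A' : K' →L[ℂ] K'), (∀ x, W (A x) = A' (W x)) →
      ∀ (n : ℕ) x, W ((A ^ n) x) = (A' ^ n) (W x) := by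
    intro A A' hA n
    induction n with
    | zero => simp
    | succ n ih =>
      intro x
      rw [clm_pow_succ_apply, clm_pow_succ_apply, ih, hA]
  have hsurj : Function.Surjective W := by
    have hclosed : IsClosed (Set.range W) := W.isometry.isClosedEmbedding.isClosed_range
    have hle : Submodule.span ℂ
        (⋃ (n1 : ℕ) (n2 : ℕ), ⇑((V1' ^ n1) ∘L (V2' ^ n2)) '' Set.range ⇑Pi')
        ≤ LinearMap.range W.toLinearMap := by
      refine Submodule.span_le.2 ?_
      intro x hx
      simp only [Set.mem_iUnion] at hx
      obtain ⟨n1, n2, _, ⟨k, rfl⟩, rfl⟩ := hx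
      refine ⟨(V1 ^ n1) ((V2 ^ n2) (Pi k)), ?_⟩
      change W _ = _
      rw [hpow V1 V1' hW1, hpow V2 V2' hW2, hW0, comp_apply]
    have hdense : DenseRange W := hm'.mono hle
    intro y
    have : y ∈ closure (Set.range W) := hdense y
    rwa [hclosed.closure_eq] at this
  exact ⟨LinearIsometryEquiv.ofSurjective W hsurj, hW0, hW1, hW2⟩

end AndoLift

theorem stmt_19 {H : Type u}
    [NormedAddCommGroup H] [InnerProductSpace ℂ H] [CompleteSpace H]
    (T1 T2 : H →L[ℂ] H) (h1 : ‖T1‖ ≤ 1) (h2 : ‖T2‖ ≤ 1)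
    (hc : T1 ∘L T2 = T2 ∘L T1)
    (hsm : HasStronglyMinimalAndoLift T1 T2) :
    (∀ (K : Type u) (_ : NormedAddCommGroup K) (_ : InnerProductSpace ℂ K)
        (_ : CompleteSpace K)
        (Pi : H →L[ℂ] K) (V1 V2 : K →L[ℂ] K),
        IsAndoLift T1 T2 Pi V1 V2 → IsMinimalLift Pi V1 V2 →
          IsStronglyMinimalLift Pi V1 V2) ∧
    (∀ (K : Type u) (_ : NormedAddCommGroup K) (_ : InnerProductSpace ℂ K)
        (_ : CompleteSpace K)
        (K' : Type u) (_ : NormedAddCommGroup K') (_ : InnerProductSpace ℂ K')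
        (_ : CompleteSpace K')
        (Pi : H →L[ℂ] K) (V1 V2 : K →L[ℂ] K)
        (Pi' : H →L[ℂ] K') (V1' V2' : K' →L[ℂ] K'),
        IsAndoLift T1 T2 Pi V1 V2 → IsMinimalLift Pi V1 V2 →
        IsAndoLift T1 T2 Pi' V1' V2' → IsMinimalLift Pi' V1' V2' →
          ∃ τ : K ≃ₗᵢ[ℂ] K',
            (∀ h, τ (Pi h) = Pi' h) ∧
            (∀ x, τ (V1 x) = V1' (τ x)) ∧
            (∀ x, τ (V2 x) = V2' (τ x))) := by
  obtain ⟨L, _, _, _, P, U1, U2, hl, hs⟩ := hsm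
  refine ⟨?_, ?_⟩
  · intro K _ _ _ Pi V1 V2 hK hmin
    obtain ⟨τ, h0, hτ1, hτ2⟩ := exists_equiv_of_stronglyMinimal hl hs hK hmin
    have hpow : ∀ n x, τ (((U1 ∘L U2) ^ n) x) = ((V1 ∘L V2) ^ n) (τ x) := by
      intro n
      induction n with
      | zero => simp
      | succ n ih =>
        intro x
        rw [clm_pow_succ_apply, clm_pow_succ_apply, ih, comp_apply, comp_apply, hτ1, hτ2]
    have hd := τ.surjective.denseRange.dense_image τ.continuous hs
    refine hd.mono ?_
    rintro _ ⟨x, hx, rfl⟩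
    have hle : Submodule.span ℂ (⋃ n : ℕ, ⇑((U1 ∘L U2) ^ n) '' Set.range ⇑P)
        ≤ (Submodule.span ℂ (⋃ n : ℕ, ⇑((V1 ∘L V2) ^ n) '' Set.range ⇑Pi)).comap
          τ.toLinearEquiv.toLinearMap := by
      refine Submodule.span_le.2 ?_
      intro y hy
      obtain ⟨n, _, ⟨k, rfl⟩, rfl⟩ := Set.mem_iUnion.1 hy
      refine Submodule.subset_span (Set.mem_iUnion.2 ⟨n, Pi k, ⟨k, rfl⟩, ?_⟩)
      change _ = τ _
      rw [hpow, h0]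
    exact hle hx
  · intro K _ _ _ K' _ _ _ Pi V1 V2 Pi' V1' V2' hK hmin hK' hmin'
    obtain ⟨σ, h0, hσ1, hσ2⟩ := exists_equiv_of_stronglyMinimal hl hs hK hmin
    obtain ⟨ρ, k0, hρ1, hρ2⟩ := exists_equiv_of_stronglyMinimal hl hs hK' hmin'
    have transfer : ∀ (U : L →L[ℂ] L) (V : K →L[ℂ] K) (V' : K' →L[ℂ] K'),
        (∀ x, σ (U x) = V (σ x)) → (∀ x, ρ (U x) = V' (ρ x)) →
        ∀ x, (σ.symm.trans ρ) (V x) = V' ((σ.symm.trans ρ) x) := by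
      intro U V V' hσ hρ x
      obtain ⟨y, rfl⟩ := σ.surjective x
      simp [← hσ, ← hρ]
    refine ⟨σ.symm.trans ρ, fun h => ?_, transfer U1 V1 V1' hσ1 hρ1, transfer U2 V2 V2' hσ2 hρ2⟩
    simp [← h0, k0]
end
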